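/- Let A ⊆ B ⊆ ∂Δ_n be simplicial complexes. (1) If E(B) ⊆ E(A), then Σ_{Y complex, A⊆Y⊆B} P̲_n(Y) = ∏_{σ∈A} p_σ · ∏_{σ∈E(B)} q_σ. (2) If M(A) ⊆ M(B), then Σ_{Y complex, A⊆Y⊆B} P̄_n(Y) = ∏_{σ∈∂Δ_n, σ∉B} q_σ · ∏_{σ∈M(A)} p_σ. -/

import Mathlib

open Finset

/-- The full simplex `Δₙ`: all nonempty subsets of `[n] = {0,…,n}`. -/
def simplexAll (n : ℕ) : Finset (Finset (Fin (n+1))) :=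
  Finset.univ.filter fun σ => σ.Nonempty

/-- The boundary `∂Δₙ`: all nonempty proper subsets of `[n]`. -/
def bdry (n : ℕ) : Finset (Finset (Fin (n+1))) :=
  Finset.univ.filter fun σ => σ.Nonempty ∧ σ ≠ Finset.univ

/-- A hypergraph is a simplicial complex if it is closed under passing to
nonempty subsets. -/
def IsComplex {n : ℕ} (X : Finset (Finset (Fin (n+1)))) : Prop :=
  ∀ σ ∈ X, ∀ τ : Finset (Fin (n+1)), τ ⊆ σ → τ.Nonempty → τ ∈ X

instance {n : ℕ} (X : Finset (Finset (Fin (n+1)))) : Decidable (IsComplex X) :=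
  inferInstanceAs (Decidable (∀ σ ∈ X, ∀ τ : Finset (Fin (n+1)), τ ⊆ σ → τ.Nonempty → τ ∈ X))

/-- The dual hypergraph `c(X) = {σ̂ : σ ∈ ∂Δₙ, σ ∉ X}`, where `σ̂ = [n] \ σ`. -/
def dual {n : ℕ} (X : Finset (Finset (Fin (n+1)))) : Finset (Finset (Fin (n+1))) :=
  (bdry n \ X).image fun σ => σᶜ

/-- `X̄`: the smallest simplicial complex containing the hypergraph `X`. -/
def clUp {n : ℕ} (X : Finset (Finset (Fin (n+1)))) : Finset (Finset (Fin (n+1))) :=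
  Finset.univ.filter fun τ => τ.Nonempty ∧ ∃ σ ∈ X, τ ⊆ σ

/-- `X̲`: the largest simplicial complex contained in the hypergraph `X`. -/
def clLow {n : ℕ} (X : Finset (Finset (Fin (n+1)))) : Finset (Finset (Fin (n+1))) :=
  Finset.univ.filter fun τ => τ.Nonempty ∧ ∀ σ : Finset (Fin (n+1)), σ ⊆ τ → σ.Nonempty → σ ∈ X

/-- The Bernoulli measure with parameters `p` on hypergraphs contained in the
ambient set `S` of simplices: `P(X) = ∏_{σ∈X} p σ · ∏_{σ∈S\X} (1 - p σ)`. -/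
def bern {n : ℕ} (S : Finset (Finset (Fin (n+1)))) (p : Finset (Fin (n+1)) → ℝ)
    (X : Finset (Finset (Fin (n+1)))) : ℝ :=
  (∏ σ ∈ X, p σ) * ∏ σ ∈ S \ X, (1 - p σ)

/-- The upper measure: `P̄(Y) = Σ_{X ⊆ S, X̄ = Y} P(X)`. -/
def upperP {n : ℕ} (S : Finset (Finset (Fin (n+1)))) (p : Finset (Fin (n+1)) → ℝ)
    (Y : Finset (Finset (Fin (n+1)))) : ℝ :=
  ∑ X ∈ S.powerset.filter (fun X => clUp X = Y), bern S p X

/-- The lower measure: `P̲(Y) = Σ_{X ⊆ S, X̲ = Y} P(X)`. -/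
def lowerP {n : ℕ} (S : Finset (Finset (Fin (n+1)))) (p : Finset (Fin (n+1)) → ℝ)
    (Y : Finset (Finset (Fin (n+1)))) : ℝ :=
  ∑ X ∈ S.powerset.filter (fun X => clLow X = Y), bern S p X

/-- External simplices of `Y` relative to the ambient set `S`: simplices
`σ ∈ S` with `σ ∉ Y` but every nonempty proper subset of `σ` in `Y`. -/
def extSimp {n : ℕ} (S Y : Finset (Finset (Fin (n+1)))) : Finset (Finset (Fin (n+1))) :=
  S.filter fun σ => σ ∉ Y ∧ ∀ τ : Finset (Fin (n+1)), τ ⊂ σ → τ.Nonempty → τ ∈ Y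

/-- Maximal simplices of `Y`: simplices of `Y` not properly contained in another
simplex of `Y`. -/
def maxSimp {n : ℕ} (Y : Finset (Finset (Fin (n+1)))) : Finset (Finset (Fin (n+1))) :=
  Y.filter fun σ => ∀ τ ∈ Y, σ ⊆ τ → σ = τ

/-!
In both cases the hypergraphs `X` whose closure lies between `A` and `B` form an interval of the
Boolean lattice of subsets of the ambient set `S`, and a Bernoulli measure gives the interval
`[U, W]` mass `∏_{σ∈U} p_σ · ∏_{σ∈S∖W} q_σ`. For the lower closure the interval is
`[A, S ∖ E(B)]`: a minimal simplex of `X̲ ∖ B` is external to `B`, and conversely an external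
simplex of `B` lying in `X` has its boundary in `A ⊆ X`, so it survives in `X̲`. For the upper
closure the interval is `[M(A), B]`: a maximal simplex of `A` is also maximal in `B ⊇ X`, so it
can be covered by a simplex of `X` only if it belongs to `X`.
-/

theorem sum_Icc_prod_mul_prod_sdiff {ι R : Type*} [DecidableEq ι] [CommSemiring R]
    {S U W : Finset ι} (hUW : U ⊆ W) (hWS : W ⊆ S) (f g : ι → R) :
    ∑ X ∈ Icc U W, (∏ i ∈ X, f i) * ∏ i ∈ S \ X, g i =
      (∏ i ∈ U, f i) * (∏ i ∈ W \ U, (f i + g i)) * ∏ i ∈ S \ W, g i := by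
  have union_injOn : Set.InjOn (U ∪ ·) (W \ U).powerset := fun T hT T' hT' h => by
    rw [mem_coe, mem_powerset, subset_sdiff] at hT hT'
    rw [← union_sdiff_cancel_left hT.2.symm, ← union_sdiff_cancel_left hT'.2.symm]
    exact congrArg (· \ U) h
  rw [Icc_eq_image_powerset hUW, sum_image union_injOn, prod_add, mul_sum, sum_mul]
  refine sum_congr rfl fun T hT => ?_
  obtain ⟨hTW, hTU⟩ := subset_sdiff.1 (mem_powerset.1 hT)
  have sdiff_eq : S \ (U ∪ T) = S \ W ∪ (W \ U) \ T := by
    rw [_root_.sdiff_sdiff_left, sup_eq_union,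
      sdiff_union_sdiff_cancel hWS (union_subset hUW hTW)]
  have disj : Disjoint (S \ W) ((W \ U) \ T) :=
    sdiff_disjoint.mono_right (sdiff_subset.trans sdiff_subset)
  rw [prod_union hTU.symm, sdiff_eq, prod_union disj]
  ring

section

variable {n : ℕ} {S A B X : Finset (Finset (Fin (n + 1)))} {σ τ : Finset (Fin (n + 1))}

theorem sum_bern_Icc {U W : Finset (Finset (Fin (n + 1)))} (hUW : U ⊆ W) (hWS : W ⊆ S)
    (p : Finset (Fin (n + 1)) → ℝ) :
    ∑ X ∈ Icc U W, bern S p X = (∏ σ ∈ U, p σ) * ∏ σ ∈ S \ W, (1 - p σ) := by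
  simpa only [bern, add_sub_cancel, prod_const_one, mul_one] using
    sum_Icc_prod_mul_prod_sdiff hUW hWS p (1 - p ·)

theorem empty_notMem_bdry (n : ℕ) : ∅ ∉ bdry n := by
  simp [bdry]

theorem mem_clLow :
    τ ∈ clLow X ↔ τ.Nonempty ∧ ∀ σ : Finset (Fin (n + 1)), σ ⊆ τ → σ.Nonempty → σ ∈ X := by
  simp [clLow]

theorem mem_clUp : τ ∈ clUp X ↔ τ.Nonempty ∧ ∃ σ ∈ X, τ ⊆ σ := by
  simp [clUp]

theorem mem_extSimp :
    σ ∈ extSimp S B ↔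
      σ ∈ S ∧ σ ∉ B ∧ ∀ τ : Finset (Fin (n + 1)), τ ⊂ σ → τ.Nonempty → τ ∈ B := by
  simp [extSimp]

theorem mem_maxSimp : σ ∈ maxSimp A ↔ Maximal (· ∈ A) σ := by
  simp only [maxSimp, mem_filter, maximal_iff]

theorem nonempty_of_empty_notMem (hX : ∅ ∉ X) (hσ : σ ∈ X) : σ.Nonempty :=
  nonempty_iff_ne_empty.2 (ne_of_mem_of_not_mem hσ hX)

theorem clLow_subset (X : Finset (Finset (Fin (n + 1)))) : clLow X ⊆ X := fun τ hτ =>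
  (mem_clLow.1 hτ).2 τ Subset.rfl (mem_clLow.1 hτ).1

theorem isComplex_clLow (X : Finset (Finset (Fin (n + 1)))) : IsComplex (clLow X) :=
  fun _ hσ _ hτσ hτ => mem_clLow.2 ⟨hτ, fun ρ hρτ => (mem_clLow.1 hσ).2 ρ (hρτ.trans hτσ)⟩

theorem IsComplex.subset_clLow_iff (hA : IsComplex A) (hA₀ : ∅ ∉ A) :
    A ⊆ clLow X ↔ A ⊆ X :=
  ⟨fun h => h.trans (clLow_subset X), fun h σ hσ =>
    mem_clLow.2 ⟨nonempty_of_empty_notMem hA₀ hσ, fun τ hτσ hτ => h (hA σ hσ τ hτσ hτ)⟩⟩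

theorem subset_clUp (hX₀ : ∅ ∉ X) : X ⊆ clUp X := fun σ hσ =>
  mem_clUp.2 ⟨nonempty_of_empty_notMem hX₀ hσ, σ, hσ, Subset.rfl⟩

theorem isComplex_clUp (X : Finset (Finset (Fin (n + 1)))) : IsComplex (clUp X) :=
  fun _ hσ _ hτσ hτ =>
    let ⟨_, ρ, hρ, hσρ⟩ := mem_clUp.1 hσ
    mem_clUp.2 ⟨hτ, ρ, hρ, hτσ.trans hσρ⟩

theorem IsComplex.clUp_subset_iff (hB : IsComplex B) (hX₀ : ∅ ∉ X) :
    clUp X ⊆ B ↔ X ⊆ B :=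
  ⟨(subset_clUp hX₀).trans, fun h τ hτ =>
    let ⟨hτ₀, σ, hσ, hτσ⟩ := mem_clUp.1 hτ
    hB σ (h hσ) τ hτσ hτ₀⟩

theorem IsComplex.subset_iff_disjoint_extSimp {Y : Finset (Finset (Fin (n + 1)))}
    (hY : IsComplex Y) (hYS : Y ⊆ S) : Y ⊆ B ↔ Disjoint Y (extSimp S B) := by
  refine ⟨fun h => disjoint_left.2 fun σ hσ hσE => (mem_extSimp.1 hσE).2.1 (h hσ),
    fun h σ => ?_⟩
  induction σ using Finset.strongInduction with
  | H σ ih =>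
    intro hσ
    by_contra hσB
    exact disjoint_left.1 h hσ <| mem_extSimp.2
      ⟨hYS hσ, hσB, fun τ hτσ hτ => ih τ hτσ (hY σ hσ τ hτσ.subset hτ)⟩

theorem mem_clLow_of_mem_extSimp (hS : ∅ ∉ S) (hAX : A ⊆ X) (hσA : σ ∈ extSimp S A)
    (hσ : σ ∈ X) : σ ∈ clLow X := by
  obtain ⟨hσS, -, hfaces⟩ := mem_extSimp.1 hσA
  refine mem_clLow.2 ⟨nonempty_of_empty_notMem hS hσS, fun τ hτσ hτ => ?_⟩
  obtain rfl | hτσ := hτσ.eq_or_ssubset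
  · exact hσ
  · exact hAX (hfaces τ hτσ hτ)

theorem clLow_subset_iff_disjoint_extSimp (hS : ∅ ∉ S) (hXS : X ⊆ S) (hAX : A ⊆ X)
    (hE : extSimp S B ⊆ extSimp S A) : clLow X ⊆ B ↔ Disjoint X (extSimp S B) := by
  rw [(isComplex_clLow X).subset_iff_disjoint_extSimp ((clLow_subset X).trans hXS)]
  exact ⟨fun h => disjoint_left.2 fun σ hσ hσE =>
      disjoint_left.1 h (mem_clLow_of_mem_extSimp hS hAX (hE hσE) hσ) hσE,
    fun h => h.mono_left (clLow_subset X)⟩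

theorem subset_clUp_iff_maxSimp_subset_clUp (hA₀ : ∅ ∉ A) :
    A ⊆ clUp X ↔ maxSimp A ⊆ clUp X := by
  refine ⟨(filter_subset _ A).trans, fun h σ hσ => ?_⟩
  obtain ⟨m, hσm, hm⟩ := A.exists_le_maximal hσ
  exact isComplex_clUp X m (h (mem_maxSimp.2 hm)) σ hσm (nonempty_of_empty_notMem hA₀ hσ)

theorem mem_of_mem_clUp_of_mem_maxSimp (hXB : X ⊆ B) (hσB : σ ∈ maxSimp B)
    (hσ : σ ∈ clUp X) : σ ∈ X := by
  obtain ⟨-, τ, hτ, hστ⟩ := mem_clUp.1 hσ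
  exact (mem_maxSimp.1 hσB).eq_of_le (hXB hτ) hστ ▸ hτ

theorem subset_clUp_iff_maxSimp_subset (hA₀ : ∅ ∉ A) (hX₀ : ∅ ∉ X) (hXB : X ⊆ B)
    (hM : maxSimp A ⊆ maxSimp B) : A ⊆ clUp X ↔ maxSimp A ⊆ X := by
  rw [subset_clUp_iff_maxSimp_subset_clUp hA₀]
  exact ⟨fun h σ hσ => mem_of_mem_clUp_of_mem_maxSimp hXB (hM hσ) (h hσ),
    fun h => h.trans (subset_clUp hX₀)⟩

theorem filter_clLow_eq_Icc (hS : ∅ ∉ S) (hA : IsComplex A) (hAS : A ⊆ S)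
    (hE : extSimp S B ⊆ extSimp S A) :
    {X ∈ S.powerset | clLow X ∈ {Y ∈ S.powerset | IsComplex Y ∧ A ⊆ Y ∧ Y ⊆ B}} =
      Icc A (S \ extSimp S B) := by
  ext X
  simp only [mem_filter, mem_powerset, mem_Icc, isComplex_clLow, true_and,
    subset_sdiff, hA.subset_clLow_iff (notMem_mono hAS hS)]
  constructor
  · rintro ⟨hXS, -, hAX, hXB⟩
    exact ⟨hAX, hXS, (clLow_subset_iff_disjoint_extSimp hS hXS hAX hE).1 hXB⟩
  · rintro ⟨hAX, hXS, hXE⟩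
    exact ⟨hXS, (clLow_subset X).trans hXS, hAX,
      (clLow_subset_iff_disjoint_extSimp hS hXS hAX hE).2 hXE⟩

theorem filter_clUp_eq_Icc (hS : ∅ ∉ S) (hB : IsComplex B) (hAB : A ⊆ B) (hBS : B ⊆ S)
    (hM : maxSimp A ⊆ maxSimp B) :
    {X ∈ S.powerset | clUp X ∈ {Y ∈ S.powerset | IsComplex Y ∧ A ⊆ Y ∧ Y ⊆ B}} =
      Icc (maxSimp A) B := by
  have hA₀ : ∅ ∉ A := notMem_mono (hAB.trans hBS) hS
  ext X
  simp only [mem_filter, mem_powerset, mem_Icc, isComplex_clUp, true_and]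
  constructor
  · rintro ⟨hXS, -, hAX, hXB⟩
    have hX₀ : ∅ ∉ X := notMem_mono hXS hS
    replace hXB : X ⊆ B := (hB.clUp_subset_iff hX₀).1 hXB
    exact ⟨(subset_clUp_iff_maxSimp_subset hA₀ hX₀ hXB hM).1 hAX, hXB⟩
  · rintro ⟨hAX, hXB⟩
    have hXS : X ⊆ S := hXB.trans hBS
    have hX₀ : ∅ ∉ X := notMem_mono hXS hS
    have hupB : clUp X ⊆ B := (hB.clUp_subset_iff hX₀).2 hXB
    exact ⟨hXS, hupB.trans hBS, (subset_clUp_iff_maxSimp_subset hA₀ hX₀ hXB hM).2 hAX, hupB⟩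

theorem sum_lowerP_sandwich (p : Finset (Fin (n + 1)) → ℝ) (hS : ∅ ∉ S) (hA : IsComplex A)
    (hAB : A ⊆ B) (hBS : B ⊆ S) (hE : extSimp S B ⊆ extSimp S A) :
    ∑ Y ∈ S.powerset with IsComplex Y ∧ A ⊆ Y ∧ Y ⊆ B, lowerP S p Y =
      (∏ σ ∈ A, p σ) * ∏ σ ∈ extSimp S B, (1 - p σ) := by
  have hAS : A ⊆ S := hAB.trans hBS
  have hES : extSimp S B ⊆ S := filter_subset _ S
  have hAE : A ⊆ S \ extSimp S B := subset_sdiff.2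
    ⟨hAS, disjoint_right.2 fun σ hσ hσA => (mem_extSimp.1 hσ).2.1 (hAB hσA)⟩
  unfold lowerP
  rw [sum_fiberwise_eq_sum_filter, filter_clLow_eq_Icc hS hA hAS hE,
    sum_bern_Icc hAE sdiff_subset, Finset.sdiff_sdiff_eq_self hES]

theorem sum_upperP_sandwich (p : Finset (Fin (n + 1)) → ℝ) (hS : ∅ ∉ S) (hB : IsComplex B)
    (hAB : A ⊆ B) (hBS : B ⊆ S) (hM : maxSimp A ⊆ maxSimp B) :
    ∑ Y ∈ S.powerset with IsComplex Y ∧ A ⊆ Y ∧ Y ⊆ B, upperP S p Y =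
      (∏ σ ∈ S \ B, (1 - p σ)) * ∏ σ ∈ maxSimp A, p σ := by
  have hMB : maxSimp A ⊆ B := (filter_subset _ A).trans hAB
  unfold upperP
  rw [sum_fiberwise_eq_sum_filter, filter_clUp_eq_Icc hS hB hAB hBS hM,
    sum_bern_Icc hMB hBS, mul_comm]

theorem sandwich_special_general (p : Finset (Fin (n + 1)) → ℝ) (hS : ∅ ∉ S)
    (hA : IsComplex A) (hB : IsComplex B) (hAB : A ⊆ B) (hBS : B ⊆ S) :
    (extSimp S B ⊆ extSimp S A →
      ∑ Y ∈ S.powerset with IsComplex Y ∧ A ⊆ Y ∧ Y ⊆ B, lowerP S p Y =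
        (∏ σ ∈ A, p σ) * ∏ σ ∈ extSimp S B, (1 - p σ)) ∧
    (maxSimp A ⊆ maxSimp B →
      ∑ Y ∈ S.powerset with IsComplex Y ∧ A ⊆ Y ∧ Y ⊆ B, upperP S p Y =
        (∏ σ ∈ S \ B, (1 - p σ)) * ∏ σ ∈ maxSimp A, p σ) :=
  ⟨sum_lowerP_sandwich p hS hA hAB hBS, sum_upperP_sandwich p hS hB hAB hBS⟩

end

/-- Corollary: for simplicial complexes `A ⊆ B ⊆ ∂Δₙ`, (1) if `E(B) ⊆ E(A)`
then the lower sandwich probability equals `∏_{σ∈A} p_σ · ∏_{σ∈E(B)} q_σ`;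
(2) if `M(A) ⊆ M(B)` then the upper sandwich probability equals
`∏_{σ∉B} q_σ · ∏_{σ∈M(A)} p_σ`. -/
theorem sandwich_special (n : ℕ) (hn : 1 ≤ n) (p : Finset (Fin (n+1)) → ℝ)
    (hp : ∀ σ ∈ bdry n, 0 ≤ p σ ∧ p σ ≤ 1)
    (A B : Finset (Finset (Fin (n+1))))
    (hA : IsComplex A) (hB : IsComplex B) (hAB : A ⊆ B) (hBb : B ⊆ bdry n) :
    (extSimp (bdry n) B ⊆ extSimp (bdry n) A →
      ∑ Y ∈ (bdry n).powerset.filter (fun Y => IsComplex Y ∧ A ⊆ Y ∧ Y ⊆ B),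
          lowerP (bdry n) p Y
        = (∏ σ ∈ A, p σ) * ∏ σ ∈ extSimp (bdry n) B, (1 - p σ)) ∧
    (maxSimp A ⊆ maxSimp B →
      ∑ Y ∈ (bdry n).powerset.filter (fun Y => IsComplex Y ∧ A ⊆ Y ∧ Y ⊆ B),
          upperP (bdry n) p Y
        = (∏ σ ∈ bdry n \ B, (1 - p σ)) * ∏ σ ∈ maxSimp A, p σ) :=
  sandwich_special_general p (empty_notMem_bdry n) hA hB hAB hBb
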